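/- Let G be a directed graph and G̃ a nonempty subgraph of G. Set Δ = Δ_out(G) + Δ_in(G) and ℓ = ⌊(δ_out(G̃)+1)/(1 + ln 6 + 3 ln Δ)⌋. If ℓ ≥ 1, then G̃ admits a valid ℓ-coloring, and hence C(G) ≥ ℓ. -/

import Mathlib

noncomputable section

/-- Closed out-neighborhood of `v` in the graph with vertex set `S` and edge relation `E`. -/
def Nbr {V : Type*} (E : V → V → Prop) (S : Set V) (v : V) : Set V :=
  {v} ∪ {u | u ∈ S ∧ E v u}

/-- A valid `ℓ`-coloring of the graph `(S, E)`: every color appears on every closed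
out-neighborhood. -/
def ValidColoring {V : Type*} (E : V → V → Prop) (S : Set V) (ℓ : ℕ) (c : V → Fin ℓ) : Prop :=
  ∀ v ∈ S, ∀ i : Fin ℓ, ∃ u ∈ Nbr E S v, u ∈ S ∧ c u = i

/-- `(S, E')` is a nonempty subgraph of the graph `E` (on vertex set the whole type). -/
def IsSubgraph {V : Type*} (E : V → V → Prop) (S : Set V) (E' : V → V → Prop) : Prop :=
  S.Nonempty ∧ ∀ u v, E' u v → E u v ∧ u ∈ S ∧ v ∈ S

/-- Some nonempty subgraph of `E` admits a valid `ℓ`-coloring. -/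
def HasValid {V : Type*} (E : V → V → Prop) (ℓ : ℕ) : Prop :=
  ∃ (S : Set V) (E' : V → V → Prop) (c : V → Fin ℓ),
    IsSubgraph E S E' ∧ ValidColoring E' S ℓ c

/-- The writing capacity of the directed graph `E`. -/
def Cap {V : Type*} (E : V → V → Prop) : ℕ := sSup {ℓ | HasValid E ℓ}

/-- Out-degree. -/
def outDeg {V : Type*} (E : V → V → Prop) (v : V) : ℕ := Set.ncard {u | E v u}

/-- Maximum out-degree. -/
def maxOutDeg {V : Type*} [Fintype V] (E : V → V → Prop) : ℕ :=
  Finset.univ.sup (outDeg E)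

/-- Maximum in-degree. -/
def maxInDeg {V : Type*} [Fintype V] (E : V → V → Prop) : ℕ :=
  Finset.univ.sup (fun v => Set.ncard {u | E u v})

/-- Out-degree of `v` inside the subgraph `(S, E')`. -/
def subOutDeg {V : Type*} (E' : V → V → Prop) (S : Set V) (v : V) : ℕ :=
  Set.ncard {u | u ∈ S ∧ E' v u}

/-- Minimum out-degree of the subgraph `(S, E')`. -/
def minOutDeg {V : Type*} (E' : V → V → Prop) (S : Set V) : ℕ :=
  sInf {d | ∃ v ∈ S, d = subOutDeg E' S v}

/-- The largest `k` such that `E` has a `k`-core (a nonempty subgraph of minimum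
out-degree at least `k`). -/
def eta {V : Type*} (E : V → V → Prop) : ℕ :=
  sSup {k | ∃ (S : Set V) (E' : V → V → Prop),
    IsSubgraph E S E' ∧ ∀ v ∈ S, k ≤ subOutDeg E' S v}

/-- Number of directed edges. -/
def edgeCount {V : Type*} (E : V → V → Prop) : ℕ :=
  Set.ncard {p : V × V | E p.1 p.2}

/-!
Color the vertices uniformly and independently at random. By a union bound over the `ℓ` colors, some
color is missing from a given closed out-neighborhood with probability at most `ℓ exp (-δ / ℓ)`, and
this event is independent of the family of those at vertices whose closed out-neighborhoods are
disjoint from the given one. A closed out-neighborhood meets at most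
`(Δ_out + 1) (Δ_in + 1) - 1 ≤ 2 Δ ^ 2 - 1` others, so the Lovász local lemma produces a coloring for
which none of these events occurs.
-/

open MeasureTheory ProbabilityTheory

section LocalLemma

variable {ι Ω : Type*}

/-- The event that none of the events `A j` with `j ∈ T` occurs; it is the conditioning event of
the local lemma. -/
def avoidAll (A : ι → Set Ω) (T : Finset ι) : Set Ω :=
  ⋂ j ∈ T, (A j)ᶜ

theorem mem_avoidAll {A : ι → Set Ω} {T : Finset ι} {ω : Ω} :
    ω ∈ avoidAll A T ↔ ∀ j ∈ T, ω ∉ A j := by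
  simp [avoidAll]

theorem avoidAll_empty (A : ι → Set Ω) : avoidAll A ∅ = Set.univ := by
  simp [avoidAll]

theorem avoidAll_insert [DecidableEq ι] (A : ι → Set Ω) (i : ι) (T : Finset ι) :
    avoidAll A (insert i T) = avoidAll A T \ A i := by
  ext ω
  simp [mem_avoidAll, and_comm]

theorem avoidAll_anti {A : ι → Set Ω} {T U : Finset ι} (h : T ⊆ U) :
    avoidAll A U ⊆ avoidAll A T :=
  Set.biInter_mono h fun _ _ ↦ Set.Subset.rfl

theorem measurableSet_avoidAll {_ : MeasurableSpace Ω} {A : ι → Set Ω} {T : Finset ι}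
    (hA : ∀ i ∈ T, MeasurableSet (A i)) : MeasurableSet (avoidAll A T) :=
  T.measurableSet_biInter fun i hi ↦ (hA i hi).compl

variable [MeasurableSpace Ω] {μ : Measure Ω} {A : ι → Set Ω} {Γ : ι → Finset ι} {p x : ι → ℝ}

/-- `Γ` is a lopsided dependency graph for the events `A` with probability bounds `p`: conditionally
on avoiding any events outside `Γ i`, the event `A i` has probability at most `p i`. The conditional
probability is cleared of its denominator, so that null conditioning events need no exception. -/
def IsLopsidependencyGraph (μ : Measure Ω) (A : ι → Set Ω) (Γ : ι → Finset ι) (p : ι → ℝ) : Prop :=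
  ∀ (i : ι) (T : Finset ι), i ∉ T → Disjoint T (Γ i) →
    μ.real (A i ∩ avoidAll A T) ≤ p i * μ.real (avoidAll A T)

-- The chain rule for conditional probabilities, avoiding the events of `U` one at a time.
theorem prod_one_sub_mul_measureReal_avoidAll_le [DecidableEq ι] [IsFiniteMeasure μ]
    (hA : ∀ i, MeasurableSet (A i)) (hx : ∀ i, x i ≤ 1) {T U : Finset ι} (hTU : Disjoint T U)
    (hcond : ∀ W ⊂ T ∪ U, ∀ i ∉ W, μ.real (A i ∩ avoidAll A W) ≤ x i * μ.real (avoidAll A W)) :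
    (∏ j ∈ U, (1 - x j)) * μ.real (avoidAll A T) ≤ μ.real (avoidAll A (T ∪ U)) := by
  induction U using Finset.induction_on with
  | empty => simp
  | insert i U hiU ih =>
    obtain ⟨hiT, hTU⟩ := Finset.disjoint_insert_right.1 hTU
    have hi : i ∉ T ∪ U := by simp [hiT, hiU]
    rw [Finset.union_insert] at hcond ⊢
    have hss : T ∪ U ⊂ insert i (T ∪ U) := Finset.ssubset_insert hi
    calc (∏ j ∈ insert i U, (1 - x j)) * μ.real (avoidAll A T)
        = (1 - x i) * ((∏ j ∈ U, (1 - x j)) * μ.real (avoidAll A T)) := by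
          rw [Finset.prod_insert hiU, mul_assoc]
      _ ≤ (1 - x i) * μ.real (avoidAll A (T ∪ U)) :=
          mul_le_mul_of_nonneg_left (ih hTU fun W hW ↦ hcond W (hW.trans hss))
            (sub_nonneg.2 (hx i))
      _ ≤ μ.real (avoidAll A (T ∪ U)) - μ.real (A i ∩ avoidAll A (T ∪ U)) := by
          linarith [hcond _ hss i hi]
      _ = μ.real (avoidAll A (insert i (T ∪ U))) := by
          rw [avoidAll_insert, Set.inter_comm,
            ← measureReal_inter_add_sdiff (s := avoidAll A (T ∪ U)) (hA i), add_sub_cancel_left]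

theorem IsLopsidependencyGraph.measureReal_inter_avoidAll_le [IsFiniteMeasure μ]
    (hΓ : IsLopsidependencyGraph μ A Γ p) (hA : ∀ i, MeasurableSet (A i))
    (hx : ∀ i, x i ∈ Set.Icc 0 1) (hp : ∀ i, p i ≤ x i * ∏ j ∈ Γ i, (1 - x j))
    (T : Finset ι) {i : ι} (hi : i ∉ T) :
    μ.real (A i ∩ avoidAll A T) ≤ x i * μ.real (avoidAll A T) := by
  classical
  induction T using Finset.strongInduction generalizing i with
  | H T ih =>
    have hdecomp : T \ Γ i ∪ T ∩ Γ i = T := Finset.sdiff_union_inter T (Γ i)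
    have hprod : ∏ j ∈ Γ i, (1 - x j) ≤ ∏ j ∈ T ∩ Γ i, (1 - x j) :=
      Finset.prod_anti_set_of_le_one (fun j ↦ sub_nonneg.2 (hx j).2)
        (fun j ↦ sub_le_self _ (hx j).1) Finset.inter_subset_right
    have htelescope : (∏ j ∈ T ∩ Γ i, (1 - x j)) * μ.real (avoidAll A (T \ Γ i)) ≤
        μ.real (avoidAll A T) := by
      have := prod_one_sub_mul_measureReal_avoidAll_le (μ := μ) hA (fun j ↦ (hx j).2)
        (Finset.disjoint_sdiff_inter T (Γ i))
      rw [hdecomp] at this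
      exact this fun W hW j hj ↦ ih W hW hj
    calc μ.real (A i ∩ avoidAll A T)
        ≤ μ.real (A i ∩ avoidAll A (T \ Γ i)) :=
          measureReal_mono (Set.inter_subset_inter_right _ (avoidAll_anti Finset.sdiff_subset))
      _ ≤ p i * μ.real (avoidAll A (T \ Γ i)) :=
          hΓ i _ (fun h ↦ hi (Finset.sdiff_subset h)) Finset.sdiff_disjoint
      _ ≤ x i * (∏ j ∈ T ∩ Γ i, (1 - x j)) * μ.real (avoidAll A (T \ Γ i)) := by
          have := (hp i).trans (mul_le_mul_of_nonneg_left hprod (hx i).1)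
          gcongr
      _ ≤ x i * μ.real (avoidAll A T) := by
          rw [mul_assoc]
          exact mul_le_mul_of_nonneg_left htelescope (hx i).1

theorem IsLopsidependencyGraph.prod_one_sub_le_measureReal_avoidAll [IsProbabilityMeasure μ]
    (hΓ : IsLopsidependencyGraph μ A Γ p) (hA : ∀ i, MeasurableSet (A i))
    (hx : ∀ i, x i ∈ Set.Icc 0 1) (hp : ∀ i, p i ≤ x i * ∏ j ∈ Γ i, (1 - x j)) (T : Finset ι) :
    ∏ j ∈ T, (1 - x j) ≤ μ.real (avoidAll A T) := by
  classical
  simpa [avoidAll_empty] using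
    prod_one_sub_mul_measureReal_avoidAll_le (μ := μ) hA (fun i ↦ (hx i).2)
      (Finset.disjoint_empty_left T)
      fun W _ i hi ↦ hΓ.measureReal_inter_avoidAll_le hA hx hp W hi

theorem exp_neg_one_le_one_sub_inv_pow {d : ℕ} (hd : d ≠ 0) :
    Real.exp (-1) ≤ (1 - ((d : ℝ) + 1)⁻¹) ^ d := by
  calc Real.exp (-1) ≤ ((1 + (d : ℝ)⁻¹) ^ d)⁻¹ := by
        rw [Real.exp_neg]
        gcongr
        exact Real.one_add_inv_pow_le_exp
    _ = (1 - ((d : ℝ) + 1)⁻¹) ^ d := by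
        rw [← inv_pow]
        congr 1
        field_simp
        ring

theorem exists_mul_one_sub_pow_ge (d : ℕ) :
    ∃ x ∈ Set.Ico (0 : ℝ) 1, Real.exp (-1) / (d + 1) ≤ x * (1 - x) ^ d := by
  -- The usual choice `x = 1 / (d + 1)` equals `1` at `d = 0`.
  rcases eq_or_ne d 0 with rfl | hd
  · exact ⟨Real.exp (-1), ⟨(Real.exp_pos _).le, Real.exp_lt_one_iff.2 (by norm_num)⟩, by simp⟩
  · have hd1 : (1 : ℝ) < d + 1 := by simpa using Nat.pos_of_ne_zero hd
    refine ⟨((d : ℝ) + 1)⁻¹, ⟨by positivity, inv_lt_one_of_one_lt₀ hd1⟩, ?_⟩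
    rw [div_eq_inv_mul]
    gcongr
    exact exp_neg_one_le_one_sub_inv_pow hd

theorem IsLopsidependencyGraph.exists_forall_notMem [Finite ι] [IsProbabilityMeasure μ] {q : ℝ}
    {d : ℕ} (hΓ : IsLopsidependencyGraph μ A Γ fun _ ↦ q) (hA : ∀ i, MeasurableSet (A i))
    (hd : ∀ i, (Γ i).card ≤ d) (hq : Real.exp 1 * q * (d + 1) ≤ 1) :
    ∃ ω, ∀ i, ω ∉ A i := by
  have := Fintype.ofFinite ι
  obtain ⟨x, ⟨hx0, hx1⟩, hx⟩ := exists_mul_one_sub_pow_ge d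
  have hqx : q ≤ x * (1 - x) ^ d := by
    refine le_trans ?_ hx
    rwa [le_div_iff₀ (by positivity), Real.exp_neg, ← one_div, le_div_iff₀' (Real.exp_pos _),
      ← mul_assoc]
  have hpos : 0 < μ.real (avoidAll A Finset.univ) := by
    refine lt_of_lt_of_le ?_ (hΓ.prod_one_sub_le_measureReal_avoidAll hA (x := fun _ ↦ x)
      (fun _ ↦ ⟨hx0, hx1.le⟩) (fun i ↦ hqx.trans ?_) Finset.univ)
    · exact Finset.prod_pos fun _ _ ↦ sub_pos.2 hx1
    · rw [Finset.prod_const]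
      gcongr ?_ * ?_
      exact pow_le_pow_of_le_one (sub_nonneg.2 hx1.le) (sub_le_self _ hx0) (hd i)
  obtain ⟨ω, hω⟩ := nonempty_of_measureReal_ne_zero hpos.ne'
  exact ⟨ω, fun i ↦ mem_avoidAll.1 hω i (Finset.mem_univ i)⟩

end LocalLemma

section RandomColoring

variable {V κ Ω ι : Type*}

/-- The event that the random coloring `X` leaves some color unused on `N`, that is, the bad event
at a vertex whose closed out-neighborhood is `N`. -/
def missesColor (X : V → Ω → κ) (N : Finset V) : Set Ω :=
  {ω | ∃ a, ∀ u ∈ N, X u ω ≠ a}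

theorem missesColor_eq_iUnion (X : V → Ω → κ) (N : Finset V) :
    missesColor X N = ⋃ a, ⋂ u ∈ N, X u ⁻¹' {a}ᶜ := by
  ext ω
  simp [missesColor]

variable [MeasurableSpace κ] [MeasurableSingletonClass κ]

theorem measurableSet_missesColor [Countable κ] {_ : MeasurableSpace Ω} {X : V → Ω → κ}
    {N : Finset V} (hX : ∀ u ∈ N, Measurable (X u)) : MeasurableSet (missesColor X N) := by
  rw [missesColor_eq_iUnion]
  exact .iUnion fun a ↦ N.measurableSet_biInter fun u hu ↦
    hX u hu (measurableSet_singleton a).compl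

variable [MeasurableSpace Ω] {μ : Measure Ω} {X : V → Ω → κ}

theorem measureReal_biInter_preimage_compl_singleton [Fintype κ]
    (hX : iIndepFun X μ) (hlaw : ∀ u, HasLaw (X u) (uniformOn Set.univ) μ) (N : Finset V) (a : κ) :
    μ.real (⋂ u ∈ N, X u ⁻¹' {a}ᶜ) = (1 - (Fintype.card κ : ℝ)⁻¹) ^ N.card := by
  have : Nonempty κ := ⟨a⟩
  have hcoord (u : V) : μ.real (X u ⁻¹' {a}ᶜ) = 1 - (Fintype.card κ : ℝ)⁻¹ := by
    have ha : MeasurableSet ({a} : Set κ) := measurableSet_singleton a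
    calc μ.real (X u ⁻¹' {a}ᶜ) = (uniformOn Set.univ).real ({a}ᶜ : Set κ) :=
          (hlaw u).measureReal_eq ha.compl
      _ = 1 - (Fintype.card κ : ℝ)⁻¹ := by
          rw [probReal_compl_eq_one_sub ha]
          simp [measureReal_def, uniformOn_univ]
  rw [measureReal_def,
    hX.measure_inter_preimage_eq_mul N fun _ _ ↦ (measurableSet_singleton a).compl,
    ENNReal.toReal_prod]
  exact (Finset.prod_congr rfl fun u _ ↦ hcoord u).trans (Finset.prod_const _)

theorem measureReal_missesColor_le [Fintype κ]
    (hX : iIndepFun X μ) (hlaw : ∀ u, HasLaw (X u) (uniformOn Set.univ) μ) (N : Finset V) :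
    μ.real (missesColor X N) ≤
      Fintype.card κ * Real.exp (-(N.card / Fintype.card κ : ℝ)) := by
  calc μ.real (missesColor X N)
      ≤ ∑ a : κ, μ.real (⋂ u ∈ N, X u ⁻¹' {a}ᶜ) := by
        rw [missesColor_eq_iUnion]
        exact measureReal_iUnion_fintype_le _
    _ = Fintype.card κ * (1 - (Fintype.card κ : ℝ)⁻¹) ^ N.card := by
        simp only [measureReal_biInter_preimage_compl_singleton hX hlaw, Finset.sum_const,
          Finset.card_univ, nsmul_eq_mul]
    _ ≤ Fintype.card κ * Real.exp (-(Fintype.card κ : ℝ)⁻¹) ^ N.card := by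
        gcongr
        · exact sub_nonneg.2 (Nat.cast_inv_le_one _)
        · exact Real.one_sub_le_exp_neg _
    _ = Fintype.card κ * Real.exp (-(N.card / Fintype.card κ : ℝ)) := by
        rw [← Real.exp_nat_mul, mul_neg, ← div_eq_mul_inv]

theorem isLopsidependencyGraph_missesColor [Countable κ] {q : ℝ}
    {N : ι → Finset V} {Γ : ι → Finset ι} (hX : iIndepFun X μ) (hXm : ∀ u, Measurable (X u))
    (hΓ : ∀ i j, j ≠ i → j ∉ Γ i → Disjoint (N i) (N j))
    (hq : ∀ i, μ.real (missesColor X (N i)) ≤ q) :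
    IsLopsidependencyGraph μ (fun i ↦ missesColor X (N i)) Γ fun _ ↦ q := by
  intro i T hiT hT
  have hdisj : Disjoint (N i : Set V) (⋃ j ∈ T, (N j : Set V)) :=
    Set.disjoint_iUnion₂_right.2 fun j hj ↦ Finset.disjoint_coe.2 <|
      hΓ i j (fun h ↦ hiT (h ▸ hj)) (Finset.disjoint_left.1 hT hj)
  let σ (s : Set V) : MeasurableSpace Ω := ⨆ u ∈ s, MeasurableSpace.comap (X u) inferInstance
  have hσ {s : Set V} {u : V} (hu : u ∈ s) : Measurable[σ s] (X u) :=
    Measurable.mono (comap_measurable (X u)) (le_iSup₂_of_le u hu le_rfl) le_rfl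
  have hindep : Indep (σ (N i)) (σ (⋃ j ∈ T, (N j : Set V))) μ :=
    indep_iSup_of_disjoint (fun u ↦ (hXm u).comap_le) hX.iIndep hdisj
  have hmul := (Indep_iff _ _ _).1 hindep (missesColor X (N i))
    (avoidAll (fun j ↦ missesColor X (N j)) T)
    (measurableSet_missesColor fun u hu ↦ hσ hu)
    (measurableSet_avoidAll fun j hj ↦ measurableSet_missesColor fun u hu ↦
      hσ (Set.mem_biUnion hj hu))
  rw [measureReal_def, hmul, ENNReal.toReal_mul]
  exact mul_le_mul_of_nonneg_right (hq i) measureReal_nonneg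

end RandomColoring

theorem exists_polychromatic_coloring {V κ ι : Type*} [Finite ι] [Fintype κ] [Nonempty κ]
    {N : ι → Finset V} {s d : ℕ} (hs : ∀ i, s ≤ (N i).card)
    (hd : ∀ i, {j | j ≠ i ∧ ¬Disjoint (N i) (N j)}.ncard ≤ d)
    (hsd : Real.exp 1 * (Fintype.card κ * Real.exp (-(s / Fintype.card κ : ℝ))) * (d + 1) ≤ 1) :
    ∃ c : V → κ, ∀ i a, ∃ u ∈ N i, c u = a := by
  let _ : MeasurableSpace κ := ⊤
  obtain ⟨Ω, _, μ, X, hXm, hlaw, hX, _⟩ := exists_iid V (uniformOn (Set.univ : Set κ))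
  have hmiss (i : ι) : μ.real (missesColor X (N i)) ≤
      Fintype.card κ * Real.exp (-(s / Fintype.card κ : ℝ)) := by
    refine (measureReal_missesColor_le hX hlaw (N i)).trans ?_
    gcongr
    exact hs i
  have hΓ := isLopsidependencyGraph_missesColor hX hXm
    (Γ := fun i ↦ (Set.toFinite {j | j ≠ i ∧ ¬Disjoint (N i) (N j)}).toFinset)
    (by simp +contextual) hmiss
  obtain ⟨ω, hω⟩ := hΓ.exists_forall_notMem
    (fun i ↦ measurableSet_missesColor fun u _ ↦ hXm u)
    (fun i ↦ (Set.ncard_eq_toFinset_card _).symm.trans_le (hd i)) hsd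
  refine ⟨fun u ↦ X u ω, fun i a ↦ ?_⟩
  by_contra! hunused
  exact hω i ⟨a, hunused⟩

section Estimates

theorem one_le_log_six : 1 ≤ Real.log 6 := by
  rw [Real.le_log_iff_exp_le (by norm_num)]
  linarith [Real.exp_one_lt_three]

theorem two_le_one_add_log_six_add_log_natCast (Δ : ℕ) :
    2 ≤ 1 + Real.log 6 + 3 * Real.log Δ := by
  linarith [one_le_log_six, Real.log_natCast_nonneg Δ]

theorem exp_neg_div_le_inv_of_mul_log_le {s t y : ℝ} (ht : 0 < t) (hy : 0 < y)
    (h : t * Real.log y ≤ s) : Real.exp (-(s / t)) ≤ y⁻¹ := by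
  rw [Real.exp_neg]
  gcongr
  rwa [← Real.log_le_iff_le_exp hy, le_div_iff₀' ht]

variable {ℓ δ Δ : ℕ}

theorem le_of_mul_one_add_log_le (hℓ : 1 ≤ ℓ)
    (h : ℓ * (1 + Real.log 6 + 3 * Real.log Δ) ≤ (δ : ℝ) + 1) : ℓ ≤ δ := by
  have hℓ' : (1 : ℝ) ≤ ℓ := mod_cast hℓ
  have htwo : (ℓ : ℝ) * 2 ≤ δ + 1 :=
    (mul_le_mul_of_nonneg_left (two_le_one_add_log_six_add_log_natCast Δ) (by positivity)).trans h
  exact_mod_cast (by linarith : (ℓ : ℝ) ≤ δ)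

theorem exp_neg_div_le_inv_six_mul_pow (hℓ : 1 ≤ ℓ) (hΔ : 0 < Δ)
    (h : ℓ * (1 + Real.log 6 + 3 * Real.log Δ) ≤ (δ : ℝ) + 1) :
    Real.exp (-(δ / ℓ : ℝ)) ≤ (6 * (Δ : ℝ) ^ 3)⁻¹ := by
  have hℓ' : (1 : ℝ) ≤ ℓ := mod_cast hℓ
  have hlog : Real.log (6 * (Δ : ℝ) ^ 3) = Real.log 6 + 3 * Real.log Δ := by
    rw [Real.log_mul (by norm_num) (by positivity), Real.log_pow, Nat.cast_ofNat]
  refine exp_neg_div_le_inv_of_mul_log_le (by positivity) (by positivity) ?_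
  rw [hlog]
  -- A loop at a vertex makes its closed out-neighborhood no larger than its out-degree, so the
  -- exponent has `δ` and not `δ + 1`; the summand `1` of the denominator pays for the difference.
  linarith

theorem exp_one_mul_exp_neg_div_mul_le_one (hℓ : 1 ≤ ℓ) (hδ : δ ≤ Δ)
    (h : ℓ * (1 + Real.log 6 + 3 * Real.log Δ) ≤ (δ : ℝ) + 1) :
    Real.exp 1 * (ℓ * Real.exp (-(δ / ℓ : ℝ))) * (2 * (Δ : ℝ) ^ 2) ≤ 1 := by
  have hℓΔ : ℓ ≤ Δ := (le_of_mul_one_add_log_le hℓ h).trans hδ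
  have hΔ : 0 < Δ := hℓ.trans hℓΔ
  calc Real.exp 1 * (ℓ * Real.exp (-(δ / ℓ : ℝ))) * (2 * (Δ : ℝ) ^ 2)
      ≤ 3 * (Δ * (6 * (Δ : ℝ) ^ 3)⁻¹) * (2 * (Δ : ℝ) ^ 2) := by
        gcongr
        · exact Real.exp_one_lt_three.le
        · exact exp_neg_div_le_inv_six_mul_pow hℓ hΔ h
    _ = 1 := by
        field_simp
        norm_num

end Estimates

section Digraph

variable {V : Type*} {E E' : V → V → Prop} {S : Set V}

theorem HasValid.le_card [Fintype V] {ℓ : ℕ} (h : HasValid E ℓ) : ℓ ≤ Fintype.card V := by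
  obtain ⟨S, E', c, ⟨⟨v, hv⟩, -⟩, hc⟩ := h
  have hsurj : Function.Surjective c := fun i ↦
    let ⟨u, _, _, hu⟩ := hc v hv i
    ⟨u, hu⟩
  simpa using Fintype.card_le_of_surjective c hsurj

theorem HasValid.le_cap [Finite V] {ℓ : ℕ} (h : HasValid E ℓ) : ℓ ≤ Cap E :=
  have := Fintype.ofFinite V
  le_csSup ⟨Fintype.card V, fun _ ↦ HasValid.le_card⟩ h

theorem minOutDeg_le_subOutDeg {v : V} (hv : v ∈ S) : minOutDeg E' S ≤ subOutDeg E' S v :=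
  Nat.sInf_le ⟨v, hv, rfl⟩

theorem outDeg_le_maxOutDeg [Fintype V] (E : V → V → Prop) (v : V) : outDeg E v ≤ maxOutDeg E :=
  Finset.le_sup (f := outDeg E) (Finset.mem_univ v)

theorem ncard_inNeighbors_le_maxInDeg [Fintype V] (E : V → V → Prop) (v : V) :
    {u | E u v}.ncard ≤ maxInDeg E :=
  Finset.le_sup (f := fun v ↦ {u | E u v}.ncard) (Finset.mem_univ v)

theorem subOutDeg_le_maxOutDeg [Fintype V] (hE : E' ≤ E) (S : Set V) (v : V) :
    subOutDeg E' S v ≤ maxOutDeg E :=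
  (Set.ncard_le_ncard fun _ hu ↦ hE v _ hu.2).trans (outDeg_le_maxOutDeg E v)

theorem minOutDeg_le_maxOutDeg [Fintype V] (hE : E' ≤ E) (hS : S.Nonempty) :
    minOutDeg E' S ≤ maxOutDeg E :=
  let ⟨v, hv⟩ := hS
  (minOutDeg_le_subOutDeg hv).trans (subOutDeg_le_maxOutDeg hE S v)

theorem Nbr_subset {v : V} (hv : v ∈ S) : Nbr E S v ⊆ S :=
  Set.insert_subset hv fun _ hu ↦ hu.1

theorem subOutDeg_le_ncard_Nbr [Finite V] (E : V → V → Prop) (S : Set V) (v : V) :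
    subOutDeg E S v ≤ (Nbr E S v).ncard :=
  Set.ncard_le_ncard (Set.subset_insert _ _)

theorem ncard_Nbr_le [Fintype V] (hE : E' ≤ E) (S : Set V) (v : V) :
    (Nbr E' S v).ncard ≤ maxOutDeg E + 1 :=
  (Set.ncard_insert_le _ _).trans (Nat.add_le_add_right (subOutDeg_le_maxOutDeg hE S v) 1)

theorem ncard_setOf_mem_Nbr_le [Fintype V] (hE : E' ≤ E) (S : Set V) (u : V) :
    {w | u ∈ Nbr E' S w}.ncard ≤ maxInDeg E + 1 := by
  have hsub : {w | u ∈ Nbr E' S w} ⊆ insert u {w | E w u} := by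
    rintro w (rfl | ⟨-, hwu⟩)
    · exact Set.mem_insert _ _
    · exact Set.mem_insert_of_mem _ (hE w u hwu)
  calc {w | u ∈ Nbr E' S w}.ncard ≤ (insert u {w | E w u}).ncard := Set.ncard_le_ncard hsub
    _ ≤ {w | E w u}.ncard + 1 := Set.ncard_insert_le _ _
    _ ≤ maxInDeg E + 1 := Nat.add_le_add_right (ncard_inNeighbors_le_maxInDeg E u) 1

theorem ncard_setOf_not_disjoint_Nbr_le [Fintype V] (hE : E' ≤ E) (S : Set V) (v : V) :
    {w | ¬Disjoint (Nbr E' S v) (Nbr E' S w)}.ncard ≤ (maxOutDeg E + 1) * (maxInDeg E + 1) := by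
  classical
  have hunion : {w | ¬Disjoint (Nbr E' S v) (Nbr E' S w)} =
      ⋃ u ∈ (Nbr E' S v).toFinset, {w | u ∈ Nbr E' S w} := by
    ext w
    simp [Set.not_disjoint_iff]
  rw [hunion]
  calc (⋃ u ∈ (Nbr E' S v).toFinset, {w | u ∈ Nbr E' S w}).ncard
      ≤ ∑ u ∈ (Nbr E' S v).toFinset, {w | u ∈ Nbr E' S w}.ncard := Finset.set_ncard_biUnion_le _ _
    _ ≤ (Nbr E' S v).toFinset.card * (maxInDeg E + 1) :=
        Finset.sum_le_card_nsmul _ _ _ fun u _ ↦ ncard_setOf_mem_Nbr_le hE S u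
    _ ≤ (maxOutDeg E + 1) * (maxInDeg E + 1) := by
        rw [← Set.ncard_eq_toFinset_card']
        exact Nat.mul_le_mul_right _ (ncard_Nbr_le hE S v)

theorem ncard_setOf_ne_and_not_disjoint_Nbr_le [Fintype V] (hE : E' ≤ E) (S : Set V) (v : V) :
    {w | w ≠ v ∧ ¬Disjoint (Nbr E' S v) (Nbr E' S w)}.ncard ≤
      maxOutDeg E + maxInDeg E + maxOutDeg E * maxInDeg E := by
  have hv : v ∈ {w | ¬Disjoint (Nbr E' S v) (Nbr E' S w)} :=
    Set.not_disjoint_iff.2 ⟨v, Or.inl rfl, Or.inl rfl⟩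
  have hdiff : {w | w ≠ v ∧ ¬Disjoint (Nbr E' S v) (Nbr E' S w)} =
      {w | ¬Disjoint (Nbr E' S v) (Nbr E' S w)} \ {v} := by
    ext w
    exact and_comm
  have hcard := Set.ncard_sdiff_singleton_lt_of_mem hv
  rw [← hdiff] at hcard
  linarith [ncard_setOf_not_disjoint_Nbr_le hE S v]

theorem exists_validColoring_of_exp_mul_le_one [Fintype V] (hE : E' ≤ E) {ℓ : ℕ} (hℓ : ℓ ≠ 0)
    (hbound : Real.exp 1 * (ℓ * Real.exp (-(minOutDeg E' S / ℓ : ℝ))) *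
      ((maxOutDeg E + maxInDeg E + maxOutDeg E * maxInDeg E : ℕ) + 1) ≤ 1) :
    ∃ c : V → Fin ℓ, ValidColoring E' S ℓ c := by
  classical
  have : NeZero ℓ := ⟨hℓ⟩
  let N (v : S) : Finset V := (Nbr E' S v).toFinset
  have hsize (v : S) : minOutDeg E' S ≤ (N v).card := by
    rw [← Set.ncard_eq_toFinset_card']
    exact (minOutDeg_le_subOutDeg v.2).trans (subOutDeg_le_ncard_Nbr E' S v)
  have hdep (v : S) : {w | w ≠ v ∧ ¬Disjoint (N v) (N w)}.ncard ≤
      maxOutDeg E + maxInDeg E + maxOutDeg E * maxInDeg E := by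
    refine le_trans ?_ (ncard_setOf_ne_and_not_disjoint_Nbr_le hE S v)
    refine Set.ncard_le_ncard_of_injOn Subtype.val (fun w hw ↦ ?_) Subtype.val_injective.injOn
    simpa [N, Subtype.ext_iff] using hw
  obtain ⟨c, hc⟩ := exists_polychromatic_coloring (κ := Fin ℓ) hsize hdep
    (by rwa [Fintype.card_fin])
  refine ⟨c, fun v hv i ↦ ?_⟩
  obtain ⟨u, hu, hui⟩ := hc ⟨v, hv⟩ i
  have hu : u ∈ Nbr E' S v := Set.mem_toFinset.1 hu
  exact ⟨u, hu, Nbr_subset hv hu, hui⟩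

theorem exists_validColoring_of_mul_log_le [Fintype V] (h : IsSubgraph E S E') {ℓ : ℕ} (hℓ : 1 ≤ ℓ)
    (hbound : ℓ * (1 + Real.log 6 + 3 * Real.log ((maxOutDeg E + maxInDeg E : ℕ) : ℝ)) ≤
      (minOutDeg E' S : ℝ) + 1) :
    ∃ c : V → Fin ℓ, ValidColoring E' S ℓ c := by
  have hE : E' ≤ E := fun u v huv ↦ (h.2 u v huv).1
  have hδ : minOutDeg E' S ≤ maxOutDeg E + maxInDeg E :=
    (minOutDeg_le_maxOutDeg hE h.1).trans (Nat.le_add_right _ _)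
  have hpos : 1 ≤ maxOutDeg E + maxInDeg E :=
    hℓ.trans ((le_of_mul_one_add_log_le hℓ hbound).trans hδ)
  have hdep : maxOutDeg E + maxInDeg E + maxOutDeg E * maxInDeg E + 1 ≤
      2 * (maxOutDeg E + maxInDeg E) ^ 2 := by
    nlinarith
  refine exists_validColoring_of_exp_mul_le_one hE (Nat.one_le_iff_ne_zero.1 hℓ) ?_
  refine le_trans ?_ (exp_one_mul_exp_neg_div_mul_le_one hℓ hδ hbound)
  gcongr
  exact_mod_cast hdep

end Digraph

/-- Lovász-local-lemma lower bound: with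
`ℓ = ⌊(δ_out(G̃)+1)/(1 + ln 6 + 3 ln Δ)⌋`, `Δ = Δ_out(G) + Δ_in(G)`, if `ℓ ≥ 1`
then `G̃` admits a valid `ℓ`-coloring, and hence `C(G) ≥ ℓ`. -/
theorem lll_lower_bound {V : Type*} [Fintype V] (E E' : V → V → Prop) (S : Set V)
    (h : IsSubgraph E S E') (ℓ : ℕ)
    (hℓdef : ℓ = ⌊((minOutDeg E' S : ℝ) + 1)
      / (1 + Real.log 6 + 3 * Real.log ((maxOutDeg E + maxInDeg E : ℕ) : ℝ))⌋₊)
    (hℓ : 1 ≤ ℓ) :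
    (∃ c : V → Fin ℓ, ValidColoring E' S ℓ c) ∧ ℓ ≤ Cap E := by
  have hex : ∃ c : V → Fin ℓ, ValidColoring E' S ℓ c := by
    refine exists_validColoring_of_mul_log_le h hℓ ?_
    have hden := two_pos.trans_le
      (two_le_one_add_log_six_add_log_natCast (maxOutDeg E + maxInDeg E))
    rw [← le_div_iff₀ hden, hℓdef]
    exact Nat.floor_le (by positivity)
  obtain ⟨c, hc⟩ := hex
  exact ⟨⟨c, hc⟩, HasValid.le_cap ⟨S, E', c, h, hc⟩⟩
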